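/- Let G be an exchange network for which the LP relaxation of maximum weight matching admits a unique optimum, and this optimum is integral, corresponding to the matching M*. Then every Nash bargaining solution (M, γ_NB) of G has M = M*, and there exists a unique fixed point α of the natural dynamics update operator whose earnings vector γ equals γ_NB. -/

import Mathlib

namespace EN

open Finset

variable {V : Type*}

/-- The nonnegative part `(x)₊ = max (x, 0)`. -/
noncomputable def pos (x : ℝ) : ℝ := max x 0

variable [Fintype V] [DecidableEq V]

/-- The maximum of `f` over a finite set of vertices (`0` over the empty set). -/
noncomputable def fmax (s : Finset V) (f : V → ℝ) : ℝ := ⨆ k ∈ s, f k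

/-- The offer from `i` to `j` given messages `α` and weights `w`:
`m_{i→j} = (w_{ij} − α_{i\j})₊ − (1/2) (w_{ij} − α_{i\j} − α_{j\i})₊`. -/
noncomputable def offer (w α : V → V → ℝ) (i j : V) : ℝ :=
  pos (w i j - α i j) - (1 / 2) * pos (w i j - α i j - α j i)

/-- The update operator `T` of the natural dynamics:
`(Tα)_{i\j} = max_{k ∈ ∂i \ j} m_{k→i}`. -/
noncomputable def upd (G : SimpleGraph V) [DecidableRel G.Adj] (w α : V → V → ℝ)
    (i j : V) : ℝ :=
  fmax ((G.neighborFinset i).erase j) fun k => offer w α k i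

/-- The earnings estimate `γ_i = max_{k ∈ ∂i} m_{k→i}`. -/
noncomputable def earn (G : SimpleGraph V) [DecidableRel G.Adj] (w α : V → V → ℝ)
    (i : V) : ℝ :=
  fmax (G.neighborFinset i) fun k => offer w α k i

/-- Exchange network weights: symmetric and positive on every edge. -/
def GoodW (G : SimpleGraph V) (w : V → V → ℝ) : Prop :=
  (∀ i j, w i j = w j i) ∧ ∀ i j, G.Adj i j → 0 < w i j

/-- A valid message vector: nonnegative on all directed edges. -/
def ValidMsg (G : SimpleGraph V) (α : V → V → ℝ) : Prop :=
  ∀ i j, G.Adj i j → 0 ≤ α i j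

/-- Fixed point of the natural-dynamics update operator. -/
def IsFixedPt (G : SimpleGraph V) [DecidableRel G.Adj] (w α : V → V → ℝ) : Prop :=
  ∀ i j, G.Adj i j → upd G w α i j = α i j

/-- `ε`-fixed point. -/
def IsEpsFixedPt (G : SimpleGraph V) [DecidableRel G.Adj] (w α : V → V → ℝ) (ε : ℝ) : Prop :=
  ∀ i j, G.Adj i j → |α i j - upd G w α i j| ≤ ε

/-- The natural dynamics with damping factor `κ`: `α^{t+1} = (1−κ) α^t + κ T α^t`. -/
noncomputable def dyn (G : SimpleGraph V) [DecidableRel G.Adj] (w : V → V → ℝ) (κ : ℝ)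
    (α0 : V → V → ℝ) : ℕ → V → V → ℝ
  | 0 => α0
  | t + 1 => fun i j =>
      (1 - κ) * dyn G w κ α0 t i j + κ * upd G w (dyn G w κ α0 t) i j

/-- Sup norm over directed edges. -/
noncomputable def msgSup (G : SimpleGraph V) [DecidableRel G.Adj] (f : V → V → ℝ) : ℝ :=
  ⨆ p : V × V, if G.Adj p.1 p.2 then |f p.1 p.2| else 0

/-- `M` is a matching of `G`: a symmetric subrelation of adjacency pairing each node
with at most one partner. -/
structure IsMatching (G : SimpleGraph V) (M : V → V → Prop) : Prop where
  subset : ∀ i j, M i j → G.Adj i j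
  symm : ∀ i j, M i j → M j i
  unique : ∀ i j k, M i j → M i k → j = k

/-- `(M, γ)` is a trade outcome. -/
def IsOutcome (G : SimpleGraph V) (w : V → V → ℝ) (M : V → V → Prop) (γ : V → ℝ) : Prop :=
  IsMatching G M ∧ (∀ i, 0 ≤ γ i) ∧ (∀ i j, M i j → γ i + γ j = w i j) ∧
    ∀ i, (∀ j, ¬M i j) → γ i = 0

/-- Stability of an outcome. -/
def Stable (G : SimpleGraph V) (w : V → V → ℝ) (M : V → V → Prop) (γ : V → ℝ) : Prop :=
  ∀ i j, G.Adj i j → ¬M i j → w i j ≤ γ i + γ j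

/-- The best alternative of `i` excluding `j`: `max_{k ∈ ∂i \ j} (w_{ik} − γ_k)₊`. -/
noncomputable def bestAlt (G : SimpleGraph V) [DecidableRel G.Adj] (w : V → V → ℝ)
    (γ : V → ℝ) (i j : V) : ℝ :=
  fmax ((G.neighborFinset i).erase j) fun k => pos (w i k - γ k)

/-- Balance of an outcome. -/
def Balanced (G : SimpleGraph V) [DecidableRel G.Adj] (w : V → V → ℝ) (M : V → V → Prop)
    (γ : V → ℝ) : Prop :=
  ∀ i j, M i j → γ i - bestAlt G w γ i j = γ j - bestAlt G w γ j i

/-- Nash bargaining solution: a stable and balanced trade outcome. -/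
def IsNBSolution (G : SimpleGraph V) [DecidableRel G.Adj] (w : V → V → ℝ)
    (M : V → V → Prop) (γ : V → ℝ) : Prop :=
  IsOutcome G w M γ ∧ Stable G w M γ ∧ Balanced G w M γ

/-- `ε`-balance. -/
def EpsBalanced (G : SimpleGraph V) [DecidableRel G.Adj] (w : V → V → ℝ)
    (M : V → V → Prop) (γ : V → ℝ) (ε : ℝ) : Prop :=
  ∀ i j, M i j → |(γ i - bestAlt G w γ i j) - (γ j - bestAlt G w γ j i)| ≤ ε

/-- `ε`-Nash bargaining solution. -/
def IsEpsNB (G : SimpleGraph V) [DecidableRel G.Adj] (w : V → V → ℝ)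
    (M : V → V → Prop) (γ : V → ℝ) (ε : ℝ) : Prop :=
  IsOutcome G w M γ ∧ Stable G w M γ ∧ EpsBalanced G w M γ ε

/-- Feasible point of the LP relaxation of maximum weight matching. -/
def LPFeasible (G : SimpleGraph V) [DecidableRel G.Adj] (x : V → V → ℝ) : Prop :=
  (∀ i j, x i j = x j i) ∧ (∀ i j, 0 ≤ x i j) ∧ (∀ i j, ¬G.Adj i j → x i j = 0) ∧
    ∀ i, ∑ j ∈ G.neighborFinset i, x i j ≤ 1

/-- LP objective `Σ_{(i,j)∈E} w_{ij} x_{ij}` (each undirected edge counted once). -/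
noncomputable def LPval (G : SimpleGraph V) [DecidableRel G.Adj] (w x : V → V → ℝ) : ℝ :=
  (1 / 2) * ∑ i, ∑ j ∈ G.neighborFinset i, w i j * x i j

/-- Optimal point of the LP relaxation of maximum weight matching. -/
def LPOptimal (G : SimpleGraph V) [DecidableRel G.Adj] (w x : V → V → ℝ) : Prop :=
  LPFeasible G x ∧ ∀ y, LPFeasible G y → LPval G w y ≤ LPval G w x

def Integral (x : V → V → ℝ) : Prop := ∀ i j, x i j = 0 ∨ x i j = 1

def HalfIntegral (x : V → V → ℝ) : Prop := ∀ i j, x i j = 0 ∨ x i j = 1 / 2 ∨ x i j = 1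

open Classical in
/-- The LP point associated to a matching. -/
noncomputable def mInd (M : V → V → Prop) (i j : V) : ℝ := if M i j then 1 else 0

/-- The state with offers `m` induces the matching `M`: every node receiving a positive
offer is matched and receives its unique best offer from its partner, and every node
with zero earnings is unmatched. -/
def Induces (G : SimpleGraph V) [DecidableRel G.Adj] (m : V → V → ℝ)
    (M : V → V → Prop) : Prop :=
  IsMatching G M ∧
    (∀ i, (∃ k, G.Adj i k ∧ 0 < m k i) →
      ∃ j, M i j ∧ ∀ k, G.Adj i k → k ≠ j → m k i < m j i) ∧
    ∀ i, (fmax (G.neighborFinset i) fun k => m k i) = 0 → ∀ j, ¬M i j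

/-- Feasibility for the dual LP. -/
def DualFeasible (G : SimpleGraph V) (w : V → V → ℝ) (y : V → ℝ) : Prop :=
  (∀ i, 0 ≤ y i) ∧ ∀ i j, G.Adj i j → w i j ≤ y i + y j

/-- Optimality for the dual LP. -/
def DualOptimal (G : SimpleGraph V) (w : V → V → ℝ) (y : V → ℝ) : Prop :=
  DualFeasible G w y ∧ ∀ z, DualFeasible G w z → ∑ i, y i ≤ ∑ i, z i

/-- The unmatched balance property at every edge. -/
def UnmatchedBalance (G : SimpleGraph V) [DecidableRel G.Adj] (w : V → V → ℝ)
    (y : V → ℝ) : Prop :=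
  ∀ i j, G.Adj i j → y i - bestAlt G w y i j = y j - bestAlt G w y j i

/-! ### Unequal division -/

/-- Valid split fractions: `r_{ij} ∈ (0,1)` with `r_{ij} + r_{ji} = 1` on every edge. -/
def GoodR (G : SimpleGraph V) (r : V → V → ℝ) : Prop :=
  ∀ i j, G.Adj i j → 0 < r i j ∧ r i j < 1 ∧ r i j + r j i = 1

/-- The UD offer from `i` to `j`. -/
noncomputable def offerUD (w r α : V → V → ℝ) (i j : V) : ℝ :=
  pos (w i j - α i j) - r i j * pos (w i j - α i j - α j i)

/-- The UD update operator. -/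
noncomputable def updUD (G : SimpleGraph V) [DecidableRel G.Adj] (w r α : V → V → ℝ)
    (i j : V) : ℝ :=
  fmax ((G.neighborFinset i).erase j) fun k => offerUD w r α k i

/-- The UD earnings estimate. -/
noncomputable def earnUD (G : SimpleGraph V) [DecidableRel G.Adj] (w r α : V → V → ℝ)
    (i : V) : ℝ :=
  fmax (G.neighborFinset i) fun k => offerUD w r α k i

/-- Fixed point of the UD update operator. -/
def IsFixedPtUD (G : SimpleGraph V) [DecidableRel G.Adj] (w r α : V → V → ℝ) : Prop :=
  ∀ i j, G.Adj i j → updUD G w r α i j = α i j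

/-- Correct division. -/
def CorrectDiv (G : SimpleGraph V) [DecidableRel G.Adj] (w r : V → V → ℝ)
    (M : V → V → Prop) (γ : V → ℝ) : Prop :=
  ∀ i j, M i j →
    (1 / r i j) * (γ i - bestAlt G w γ i j) = (1 / r j i) * (γ j - bestAlt G w γ j i)

/-- UD solution: a stable trade outcome satisfying correct division. -/
def IsUDSolution (G : SimpleGraph V) [DecidableRel G.Adj] (w r : V → V → ℝ)
    (M : V → V → Prop) (γ : V → ℝ) : Prop :=
  IsOutcome G w M γ ∧ Stable G w M γ ∧ CorrectDiv G w r M γ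

/-- Edge surplus. -/
noncomputable def surp (G : SimpleGraph V) [DecidableRel G.Adj] (w : V → V → ℝ)
    (γ : V → ℝ) (i j : V) : ℝ :=
  w i j - bestAlt G w γ i j - bestAlt G w γ j i

open Classical in
/-- The rebalanced allocation `γ^reb`. -/
noncomputable def reb (G : SimpleGraph V) [DecidableRel G.Adj] (w r : V → V → ℝ)
    (M : V → V → Prop) (γ : V → ℝ) (i : V) : ℝ :=
  if h : ∃ j, M i j then
    bestAlt G w γ i h.choose + r i h.choose * surp G w γ i h.choose
  else 0

/-- The Edge Rebalancing iteration `γ^{t+1} = κ γ^reb(γ^t) + (1−κ) γ^t`. -/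
noncomputable def rebIter (G : SimpleGraph V) [DecidableRel G.Adj] (w r : V → V → ℝ)
    (M : V → V → Prop) (κ : ℝ) (γ0 : V → ℝ) : ℕ → V → ℝ
  | 0 => γ0
  | t + 1 => fun i =>
      κ * reb G w r M (rebIter G w r M κ γ0 t) i + (1 - κ) * rebIter G w r M κ γ0 t i

lemma pos_nonneg' (x : ℝ) : 0 ≤ pos x := le_max_right _ _
lemma le_pos' (x : ℝ) : x ≤ pos x := le_max_left _ _

lemma fmax_le' {s : Finset V} {f : V → ℝ} {c : ℝ} (hc : 0 ≤ c) (h : ∀ k ∈ s, f k ≤ c) :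
    fmax s f ≤ c := by
  unfold fmax
  exact Real.iSup_le (fun k => Real.iSup_le (fun hk => h k hk) hc) hc

lemma le_fmax' {s : Finset V} {f : V → ℝ} {k : V} (hk : k ∈ s) : f k ≤ fmax s f := by
  unfold fmax
  have h := le_ciSup (f := fun k => ⨆ (_ : k ∈ s), f k) (Set.finite_range _).bddAbove k
  have h2 : (⨆ (_ : k ∈ s), f k) = f k := ciSup_pos hk
  simp only [h2] at h
  exact h

lemma fmax_nonneg' {s : Finset V} {f : V → ℝ} (h : ∀ k ∈ s, 0 ≤ f k) : 0 ≤ fmax s f := by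
  unfold fmax
  exact Real.iSup_nonneg (fun k => Real.iSup_nonneg (fun hk => h k hk))

lemma fmax_congr' {s : Finset V} {f g : V → ℝ} (h : ∀ k ∈ s, f k = g k) :
    fmax s f = fmax s g := by
  unfold fmax
  exact iSup_congr (fun k => iSup_congr (fun hk => h k hk))

lemma offer_nonneg' {w α : V → V → ℝ} {i j : V} (h : 0 ≤ α j i) : 0 ≤ offer w α i j := by
  unfold offer pos
  rcases max_cases (w i j - α i j) 0 with ⟨h1, h2⟩ | ⟨h1, h2⟩ <;>
  rcases max_cases (w i j - α i j - α j i) 0 with ⟨h3, h4⟩ | ⟨h3, h4⟩ <;>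
  rw [h1, h3] <;> linarith

lemma offer_weak {w α : V → V → ℝ} {i j : V} (h : w i j - α i j - α j i ≤ 0) :
    offer w α i j = pos (w i j - α i j) := by
  unfold offer
  have : pos (w i j - α i j - α j i) = 0 := max_eq_right h
  rw [this]; ring

lemma offer_strong {w α : V → V → ℝ} {i j : V} (h : 0 ≤ w i j - α i j - α j i)
    (hn : 0 ≤ α j i) : offer w α i j = (w i j - α i j + α j i) / 2 := by
  unfold offer
  have : pos (w i j - α i j - α j i) = _ := max_eq_left h
  rw [this]
  have : pos (w i j - α i j) = _ := max_eq_left (by linarith)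
  rw [this]; ring

lemma val_le {G : SimpleGraph V} [DecidableRel G.Adj] {w : V → V → ℝ} {γ : V → ℝ}
    (h0 : ∀ i, 0 ≤ γ i) (hd : ∀ i j, G.Adj i j → w i j ≤ γ i + γ j)
    {x : V → V → ℝ} (hx : LPFeasible G x) : LPval G w x ≤ ∑ i, γ i := by
  obtain ⟨hs, hn, hz, hl⟩ := hx
  have e : ∀ i, ∀ f : V → ℝ, ∑ j ∈ G.neighborFinset i, f j * x i j = ∑ j, f j * x i j := by
    intro i f
    apply Finset.sum_subset (Finset.subset_univ _)
    intro j _ hj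
    rw [hz i j (by simpa using hj)]; ring
  have e1 : ∑ i, ∑ j ∈ G.neighborFinset i, (γ i + γ j) * x i j
      = 2 * ∑ i, γ i * ∑ j ∈ G.neighborFinset i, x i j := by
    have a : ∀ i, γ i * ∑ j ∈ G.neighborFinset i, x i j = ∑ j, γ i * x i j := by
      intro i
      rw [Finset.mul_sum, e i (fun _ => γ i)]
    simp only [a]
    rw [Finset.sum_congr rfl (fun i _ => e i (fun j => γ i + γ j))]
    simp only [add_mul, Finset.sum_add_distrib]
    rw [two_mul]
    congr 1
    rw [Finset.sum_comm]
    exact Finset.sum_congr rfl (fun i _ => Finset.sum_congr rfl (fun j _ => by rw [hs]))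
  have h1 : ∑ i, ∑ j ∈ G.neighborFinset i, w i j * x i j
      ≤ ∑ i, ∑ j ∈ G.neighborFinset i, (γ i + γ j) * x i j := by
    refine Finset.sum_le_sum (fun i _ => Finset.sum_le_sum (fun j hj => ?_))
    exact mul_le_mul_of_nonneg_right (hd i j (by simpa using hj)) (hn i j)
  have h2 : ∑ i, γ i * ∑ j ∈ G.neighborFinset i, x i j ≤ ∑ i, γ i := by
    refine Finset.sum_le_sum (fun i _ => ?_)
    have := mul_le_mul_of_nonneg_left (hl i) (h0 i)
    linarith
  unfold LPval
  linarith

lemma mInd_sum {G : SimpleGraph V} [DecidableRel G.Adj] {M : V → V → Prop}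
    (hM : IsMatching G M) {i j : V} (h : M i j) (f : V → ℝ) :
    ∑ k ∈ G.neighborFinset i, f k * mInd M i k = f j := by
  rw [Finset.sum_eq_single j]
  · simp [mInd, h]
  · intro k _ hk
    have : ¬ M i k := fun h' => hk (hM.unique i k j h' h)
    simp [mInd, this]
  · intro hn
    exact absurd (by simpa using hM.subset i j h) hn

lemma mInd_sum0 {G : SimpleGraph V} [DecidableRel G.Adj] {M : V → V → Prop}
    {i : V} (h : ∀ j, ¬ M i j) (f : V → ℝ) :
    ∑ k ∈ G.neighborFinset i, f k * mInd M i k = 0 := by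
  apply Finset.sum_eq_zero
  intro k _
  simp [mInd, h k]

lemma mInd_feasible {G : SimpleGraph V} [DecidableRel G.Adj] {M : V → V → Prop}
    (hM : IsMatching G M) : LPFeasible G (mInd M) := by
  refine ⟨?_, ?_, ?_, ?_⟩
  · intro i j
    have : M i j ↔ M j i := ⟨hM.symm i j, hM.symm j i⟩
    by_cases h : M i j
    · simp [mInd, h, this.1 h]
    · simp [mInd, h, mt this.2 h]
  · intro i j
    unfold mInd; split_ifs <;> norm_num
  · intro i j h
    have : ¬ M i j := fun h' => h (hM.subset i j h')
    simp [mInd, this]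
  · intro i
    by_cases h : ∃ j, M i j
    · obtain ⟨j, hj⟩ := h
      have := mInd_sum hM hj (fun _ => 1)
      simp only [one_mul] at this
      exact this.le
    · push Not at h
      have := mInd_sum0 (G := G) h (fun _ => 1)
      simp only [one_mul] at this
      rw [this]; norm_num

lemma mInd_val {G : SimpleGraph V} [DecidableRel G.Adj] {w : V → V → ℝ} {M : V → V → Prop}
    {γ : V → ℝ} (h : IsOutcome G w M γ) : LPval G w (mInd M) = ∑ i, γ i := by
  obtain ⟨hM, h0, ht, hu⟩ := h
  have h1 : ∀ i, ∑ j ∈ G.neighborFinset i, w i j * mInd M i j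
      = ∑ j ∈ G.neighborFinset i, (γ i + γ j) * mInd M i j := by
    intro i
    refine Finset.sum_congr rfl (fun j _ => ?_)
    by_cases h : M i j
    · rw [ht i j h]
    · simp [mInd, h]
  have hf := mInd_feasible hM
  have e : ∀ i, ∀ f : V → ℝ, ∑ j ∈ G.neighborFinset i, f j * mInd M i j
      = ∑ j, f j * mInd M i j := by
    intro i f
    apply Finset.sum_subset (Finset.subset_univ _)
    intro j _ hj
    rw [hf.2.2.1 i j (by simpa using hj)]; ring
  have h2 : ∀ i, ∑ j, γ i * mInd M i j = γ i := by
    intro i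
    rw [← e i (fun _ => γ i)]
    by_cases h : ∃ j, M i j
    · obtain ⟨j, hj⟩ := h
      exact mInd_sum hM hj (fun _ => γ i)
    · push Not at h
      rw [mInd_sum0 h, hu i h]
  have h3 : ∑ i, ∑ j, γ j * mInd M i j = ∑ i, γ i := by
    rw [Finset.sum_comm]
    refine Finset.sum_congr rfl (fun i _ => ?_)
    rw [← h2 i]
    exact Finset.sum_congr rfl (fun j _ => by rw [hf.1, h2 i])
  unfold LPval
  simp only [h1]
  rw [Finset.sum_congr rfl (fun i _ => e i (fun j => γ i + γ j))]
  simp only [add_mul, Finset.sum_add_distrib, h2, h3]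
  ring

lemma matching_eq {G : SimpleGraph V} [DecidableRel G.Adj] {w : V → V → ℝ}
    {Mstar M : V → V → Prop} {γ : V → ℝ}
    (huniq : ∀ x, LPOptimal G w x → x = mInd Mstar)
    (ho : IsOutcome G w M γ) (hd : ∀ i j, G.Adj i j → w i j ≤ γ i + γ j) : M = Mstar := by
  have h := huniq (mInd M) ⟨mInd_feasible ho.1, fun y hy => by
    rw [mInd_val ho]; exact val_le ho.2.1 hd hy⟩
  funext i j
  have hij := congrFun (congrFun h i) j
  by_cases h1 : M i j <;> by_cases h2 : Mstar i j <;> simp_all [mInd]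

lemma bestAlt_le {G : SimpleGraph V} [DecidableRel G.Adj] {w : V → V → ℝ}
    {γ : V → ℝ} (h0 : ∀ i, 0 ≤ γ i) (hd : ∀ i j, G.Adj i j → w i j ≤ γ i + γ j) (i j : V) :
    bestAlt G w γ i j ≤ γ i := by
  refine fmax_le' (h0 i) (fun k hk => max_le ?_ (h0 i))
  have := hd i k (by simpa using Finset.mem_of_mem_erase hk)
  linarith

lemma bestAlt_nonneg {G : SimpleGraph V} [DecidableRel G.Adj] {w : V → V → ℝ}
    {γ : V → ℝ} (i j : V) : 0 ≤ bestAlt G w γ i j :=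
  fmax_nonneg' (fun _ _ => pos_nonneg' _)

open Classical in
noncomputable def sol (G : SimpleGraph V) [DecidableRel G.Adj] (w : V → V → ℝ)
    (M : V → V → Prop) (γ : V → ℝ) (i j : V) : ℝ :=
  if M i j then bestAlt G w γ i j else γ i

lemma key {G : SimpleGraph V} [DecidableRel G.Adj] {w α : V → V → ℝ} {γ : V → ℝ}
    (hsym : ∀ i j, w i j = w j i)
    (hv : ValidMsg G α) (hf : IsFixedPt G w α) (he : ∀ i, earn G w α i = γ i)
    {i j : V} (hij : G.Adj i j) :
    (α i j = γ i ∧ offer w α j i = pos (w i j - γ j)) ∨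
      (α i j < γ i ∧ offer w α j i = γ i ∧ γ i + γ j = w i j) := by
  have hmax : ∀ i j, G.Adj i j → γ i = max (α i j) (offer w α j i) := by
    intro i j hij
    rw [← he i, ← hf i j hij]
    have hnn : ∀ k ∈ G.neighborFinset i, 0 ≤ offer w α k i := fun k hk =>
      offer_nonneg' (hv i k (by simpa using hk))
    have hu : 0 ≤ upd G w α i j :=
      fmax_nonneg' (fun k hk => hnn k (Finset.mem_of_mem_erase hk))
    apply le_antisymm
    · refine fmax_le' (le_max_of_le_left hu) (fun k hk => ?_)
      by_cases hkj : k = j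
      · subst hkj; exact le_max_right _ _
      · exact le_max_of_le_left
          (le_fmax' (f := fun k => offer w α k i) (Finset.mem_erase.2 ⟨hkj, hk⟩))
    · refine max_le (fmax_le' (fmax_nonneg' hnn) (fun k hk => ?_)) ?_
      · exact le_fmax' (f := fun k => offer w α k i) (Finset.mem_of_mem_erase hk)
      · exact le_fmax' (f := fun k => offer w α k i) (by simpa using hij)
  have g1 := hmax i j hij
  have g2 := hmax j i hij.symm
  have a1 := hv i j hij
  have a2 := hv j i hij.symm
  have hs := hsym i j
  by_cases h : w i j - α i j - α j i ≤ 0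
  · left
    have o1 := offer_weak (w := w) (α := α) (i := j) (j := i) (by linarith)
    have o2 := offer_weak (w := w) (α := α) (i := i) (j := j) (by linarith)
    have p1 : pos (w j i - α j i) ≤ α i j := max_le (by linarith) a1
    have p2 : pos (w i j - α i j) ≤ α j i := max_le (by linarith) a2
    rw [o1, max_eq_left p1] at g1
    rw [o2, max_eq_left p2] at g2
    exact ⟨g1.symm, by rw [o1, g2, hs]⟩
  · right
    push Not at h
    have o1 := offer_strong (w := w) (α := α) (i := j) (j := i) (by linarith) a1
    have o2 := offer_strong (w := w) (α := α) (i := i) (j := j) (by linarith) a2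
    rw [max_eq_right (by linarith)] at g1 g2
    exact ⟨by linarith, g1.symm, by linarith⟩

/-- If the LP relaxation of maximum weight matching has a unique
optimum, which is integral and corresponds to the matching `M*`, then every Nash
bargaining solution `(M, γ_NB)` has `M = M*` and corresponds to a unique fixed point
of the natural dynamics whose earnings vector equals `γ_NB`. -/
theorem NB_gives_unique_fixedPoint
    {V : Type*} [Fintype V] [DecidableEq V] (G : SimpleGraph V) [DecidableRel G.Adj]
    (w : V → V → ℝ) (hw : GoodW G w)
    (Mstar : V → V → Prop) (hM : IsMatching G Mstar)
    (hopt : LPOptimal G w (mInd Mstar))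
    (huniq : ∀ x, LPOptimal G w x → x = mInd Mstar)
    (M : V → V → Prop) (γNB : V → ℝ) (hNB : IsNBSolution G w M γNB) :
    M = Mstar ∧
      ∃ α : V → V → ℝ, ValidMsg G α ∧ IsFixedPt G w α ∧ (∀ i, earn G w α i = γNB i) ∧
        ∀ α' : V → V → ℝ, ValidMsg G α' → IsFixedPt G w α' →
          (∀ i, earn G w α' i = γNB i) → ∀ i j, G.Adj i j → α' i j = α i j := by
  obtain ⟨hsym, hwpos⟩ := hw
  obtain ⟨ho, hst, hbal⟩ := hNB
  have hMm := ho.1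
  have h0 := ho.2.1
  have ht := ho.2.2.1
  have hun := ho.2.2.2
  have hd : ∀ i j, G.Adj i j → w i j ≤ γNB i + γNB j := by
    intro i j hij
    by_cases h : M i j
    · exact (ht i j h).ge
    · exact hst i j hij h
  refine ⟨matching_eq huniq ho hd, sol G w M γNB, ?_⟩
  have sM : ∀ {i j}, M i j → sol G w M γNB i j = bestAlt G w γNB i j := fun h => by simp [sol, h]
  have sN : ∀ {i j}, ¬ M i j → sol G w M γNB i j = γNB i := fun h => by simp [sol, h]
  have hMs : ∀ {i j}, ¬ M i j → ¬ M j i := fun h h' => h (hMm.symm _ _ h')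
  have hv : ValidMsg G (sol G w M γNB) := by
    intro i j _
    unfold sol; split_ifs
    · exact bestAlt_nonneg i j
    · exact h0 i
  have oN : ∀ i k, G.Adj i k → ¬ M i k →
      offer w (sol G w M γNB) k i = pos (w i k - γNB k) := by
    intro i k hik h
    rw [offer_weak, sN (hMs h), hsym]
    rw [sN h, sN (hMs h)]
    have := hd k i hik.symm
    linarith
  have oM : ∀ i j, M i j → offer w (sol G w M γNB) j i = γNB i := by
    intro i j h
    have h' := hMm.symm _ _ h
    have b1 := bestAlt_le h0 hd i j
    have b2 := bestAlt_le h0 hd j i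
    have := ht j i h'
    have := hbal i j h
    rw [offer_strong, sM h, sM h']
    · linarith
    · rw [sM h, sM h']; linarith
    · rw [sM h]; exact bestAlt_nonneg i j
  have ole : ∀ i k, G.Adj i k → offer w (sol G w M γNB) k i ≤ γNB i := by
    intro i k hik
    by_cases h : M i k
    · exact (oM i k h).le
    · rw [oN i k hik h]
      refine max_le ?_ (h0 i)
      have := hd i k hik
      linarith
  have onn : ∀ i k, G.Adj i k → 0 ≤ offer w (sol G w M γNB) k i := fun i k hik =>
    offer_nonneg' (hv i k hik)
  refine ⟨hv, ?_, ?_, ?_⟩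
  · intro i j hij
    by_cases h : M i j
    · rw [sM h]
      refine fmax_congr' (fun k hk => ?_)
      rw [Finset.mem_erase] at hk
      exact oN i k (by simpa using hk.2) (fun h' => hk.1 (hMm.unique _ _ _ h' h))
    · rw [sN h]
      apply le_antisymm
      · exact fmax_le' (h0 i) (fun k hk => ole i k (by simpa using Finset.mem_of_mem_erase hk))
      · by_cases hm : ∃ k, M i k
        · obtain ⟨k, hk⟩ := hm
          rw [← oM i k hk]
          refine le_fmax' (f := fun k => offer w (sol G w M γNB) k i)
            (Finset.mem_erase.2 ⟨?_, by simpa using hMm.subset _ _ hk⟩)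
          rintro rfl; exact h hk
        · push Not at hm
          rw [hun i hm]
          exact fmax_nonneg' (fun k hk => onn i k (by simpa using Finset.mem_of_mem_erase hk))
  · intro i
    apply le_antisymm
    · exact fmax_le' (h0 i) (fun k hk => ole i k (by simpa using hk))
    · by_cases hm : ∃ k, M i k
      · obtain ⟨k, hk⟩ := hm
        rw [← oM i k hk]
        exact le_fmax' (f := fun k => offer w (sol G w M γNB) k i)
          (by simpa using hMm.subset _ _ hk)
      · push Not at hm
        rw [hun i hm]
        exact fmax_nonneg' (fun k hk => onn i k (by simpa using hk))
  · intro α' hv' hf' he' i j hij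
    have K : ∀ {k}, G.Adj i k → _ := fun {k} hik => key hsym hv' hf' he' (i := i) (j := k) hik
    have ub : ∀ {k l}, G.Adj i k → G.Adj i l → l ≠ k → offer w α' l i ≤ α' i k := by
      intro k l hik hil hlk
      rw [← hf' i k hik]
      exact le_fmax' (f := fun k => offer w α' k i)
        (Finset.mem_erase.2 ⟨hlk, by simpa using hil⟩)
    have hle : α' i j ≤ bestAlt G w γNB i j := by
      rw [← hf' i j hij]
      refine fmax_le' (bestAlt_nonneg i j) (fun k hk => ?_)
      have hik : G.Adj i k := by simpa using Finset.mem_of_mem_erase hk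
      refine le_trans ?_ (le_fmax' (f := fun k => pos (w i k - γNB k)) hk)
      rcases K hik with ⟨_, h⟩ | ⟨_, h, h2⟩
      · exact h.le
      · rw [h]; refine le_trans ?_ (le_pos' _); linarith
    by_cases h : M i j
    · rw [sM h]
      rcases K hij with ⟨h1, _⟩ | ⟨h1, h2, _⟩
      · exact le_antisymm hle (h1 ▸ bestAlt_le h0 hd i j)
      · refine le_antisymm hle (fmax_le' (hv' i j hij) (fun k hk => ?_))
        rw [Finset.mem_erase] at hk
        have hik : G.Adj i k := by simpa using hk.2
        rcases K hik with ⟨_, h4⟩ | ⟨h4, _, _⟩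
        · rw [← h4]; exact ub hij hik hk.1
        · have := ub hik hij (Ne.symm hk.1)
          linarith
    · rw [sN h]
      rcases K hij with ⟨h1, _⟩ | ⟨h1, h2, _⟩
      · exact h1
      · exfalso
        have hp := hv' i j hij
        by_cases hm : ∃ k, M i k
        · obtain ⟨k, hk⟩ := hm
          have hik := hMm.subset _ _ hk
          have hkj : k ≠ j := by rintro rfl; exact h hk
          rcases K hik with ⟨_, h4⟩ | ⟨h4, _, _⟩
          · have a := ub hij hik hkj
            have b := le_pos' (w i k - γNB k)
            have c := ht i k hk
            linarith
          · have := ub hik hij (Ne.symm hkj)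
            linarith
        · push Not at hm
          have := hun i hm
          linarith
end EN
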